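/- arXiv:2601.05557 — 4 statements merged into one kernel-verified Lean document; each statement's English description precedes it below -/
import Mathlib

section
/- Define the uniform (Chebyshev) loss p(w) = max_{1 ≤ i ≤ N} | f_i − ( Σ_{j=1}^n max{0, ⟨a_j, T_i⟩} − Σ_{j=1}^n max{0, ⟨b_j, T_i⟩} ) |, and define G(w) = max_{1 ≤ i ≤ N} ( g_i(w) + Σ_{j ≠ i} h_j(w) ) and H(w) = Σ_{j=1}^N h_j(w). Then G and H are convex on ℝ^{2nd} and p(w) = G(w) − H(w) for every w; in particular p is a DC function. -/
open scoped RealInnerProductSpace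

/-- The weight space `ℝ^{2nd}`: `n` vectors `a_j ∈ ℝ^d` and `n` vectors `b_j ∈ ℝ^d`. -/
abbrev Wt (d n : ℕ) := (Fin n → EuclideanSpace ℝ (Fin d)) × (Fin n → EuclideanSpace ℝ (Fin d))

/-- `h_i(w) = ∑_j max{0, ⟨a_j, T_i⟩} + ∑_j max{0, ⟨b_j, T_i⟩}`. -/
noncomputable def hFun {d n N : ℕ} (T : Fin N → EuclideanSpace ℝ (Fin d))
    (i : Fin N) (w : Wt d n) : ℝ :=
  (∑ j, max 0 ⟪w.1 j, T i⟫) + ∑ j, max 0 ⟪w.2 j, T i⟫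

/-- `g_i(w) = max{ f_i + 2 ∑_j max{0, ⟨b_j, T_i⟩}, 2 ∑_j max{0, ⟨a_j, T_i⟩} - f_i }`. -/
noncomputable def gFun {d n N : ℕ} (T : Fin N → EuclideanSpace ℝ (Fin d))
    (f : Fin N → ℝ) (i : Fin N) (w : Wt d n) : ℝ :=
  max (f i + 2 * ∑ j, max 0 ⟪w.2 j, T i⟫)
      (2 * (∑ j, max 0 ⟪w.1 j, T i⟫) - f i)

theorem convexOn_finsum_aux {E ι : Type*} [AddCommGroup E] [Module ℝ E] (s : Finset ι)
    (F : ι → E → ℝ) (hF : ∀ i, ConvexOn ℝ Set.univ (F i)) :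
    ConvexOn ℝ Set.univ (fun w => ∑ i ∈ s, F i w) := by
  refine ⟨convex_univ, fun x _ y _ a b ha hb hab => ?_⟩
  simp only [smul_eq_mul, Finset.mul_sum]
  rw [← Finset.sum_add_distrib]
  exact Finset.sum_le_sum fun i _ => (hF i).2 (Set.mem_univ x) (Set.mem_univ y) ha hb hab

theorem convexOn_sup_aux {E ι : Type*} [AddCommGroup E] [Module ℝ E] (s : Finset ι)
    (hs : s.Nonempty) (F : ι → E → ℝ) (hF : ∀ i, ConvexOn ℝ Set.univ (F i)) :
    ConvexOn ℝ Set.univ (fun w => s.sup' hs (fun i => F i w)) := by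
  refine ⟨convex_univ, fun x _ y _ a b ha hb hab => ?_⟩
  refine Finset.sup'_le _ _ fun i hi => ?_
  refine ((hF i).2 (Set.mem_univ x) (Set.mem_univ y) ha hb hab).trans ?_
  simp only [smul_eq_mul]
  exact add_le_add
    (mul_le_mul_of_nonneg_left (Finset.le_sup' (fun i => F i x) hi) ha)
    (mul_le_mul_of_nonneg_left (Finset.le_sup' (fun i => F i y) hi) hb)

theorem convexOn_relu_aux {E : Type*} [AddCommGroup E] [Module ℝ E] (L : E → ℝ)
    (hL : ∀ (x y : E) (a b : ℝ), L (a • x + b • y) = a * L x + b * L y) :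
    ConvexOn ℝ Set.univ (fun w => max 0 (L w)) := by
  refine (convexOn_const 0 convex_univ).sup (g := L) ⟨convex_univ, ?_⟩
  intro x _ y _ a b _ _ _
  exact (hL x y a b).le

theorem convexOn_fst_aux {d n : ℕ} (t : EuclideanSpace ℝ (Fin d)) :
    ConvexOn ℝ Set.univ (fun w : Wt d n => ∑ j, max 0 ⟪w.1 j, t⟫) :=
  convexOn_finsum_aux _ _ fun j => convexOn_relu_aux _ fun x y a b => by
    simp [inner_add_left, real_inner_smul_left]

theorem convexOn_snd_aux {d n : ℕ} (t : EuclideanSpace ℝ (Fin d)) :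
    ConvexOn ℝ Set.univ (fun w : Wt d n => ∑ j, max 0 ⟪w.2 j, t⟫) :=
  convexOn_finsum_aux _ _ fun j => convexOn_relu_aux _ fun x y a b => by
    simp [inner_add_left, real_inner_smul_left]

theorem convexOn_hFun {d n N : ℕ} (T : Fin N → EuclideanSpace ℝ (Fin d)) (i : Fin N) :
    ConvexOn ℝ Set.univ (fun w : Wt d n => hFun T i w) :=
  (convexOn_fst_aux (T i)).add (convexOn_snd_aux (T i))

theorem convexOn_gFun {d n N : ℕ} (T : Fin N → EuclideanSpace ℝ (Fin d)) (f : Fin N → ℝ)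
    (i : Fin N) : ConvexOn ℝ Set.univ (fun w : Wt d n => gFun T f i w) := by
  have h1 := (convexOn_const (𝕜 := ℝ) (f i) convex_univ).add
    ((convexOn_snd_aux (n := n) (T i)).smul (zero_le_two (α := ℝ)))
  have h2 := ((convexOn_fst_aux (n := n) (T i)).smul (zero_le_two (α := ℝ))).add
    (convexOn_const (𝕜 := ℝ) (-f i) convex_univ)
  have h := h1.sup h2
  have e : (fun w : Wt d n => gFun T f i w) =
      ((fun _ => f i) + fun x : Wt d n => (2 : ℝ) • ∑ j, max 0 ⟪x.2 j, T i⟫) ⊔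
        ((fun x : Wt d n => (2 : ℝ) • ∑ j, max 0 ⟪x.1 j, T i⟫) + fun _ => -f i) := by
    funext w
    exact congrArg₂ max rfl (sub_eq_add_neg _ _)
  rw [e]
  exact h

/-- the uniform (Chebyshev) loss
`p(w) = max_i |f_i - (∑_j max{0,⟨a_j,T_i⟩} - ∑_j max{0,⟨b_j,T_i⟩})|`
equals `G - H` where `G(w) = max_i (g_i(w) + ∑_{j ≠ i} h_j(w))` and
`H(w) = ∑_j h_j(w)` are convex; in particular `p` is DC. -/
theorem stmt_4 (d n N : ℕ) (hd : 0 < d) (hn : 0 < n) (hN : 0 < N)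
    (T : Fin N → EuclideanSpace ℝ (Fin d)) (f : Fin N → ℝ) :
    ConvexOn ℝ Set.univ (fun w : Wt d n =>
        Finset.univ.sup' (Finset.univ_nonempty_iff.mpr ⟨⟨0, hN⟩⟩)
          (fun i => gFun T f i w + ∑ j ∈ Finset.univ.erase i, hFun T j w)) ∧
    ConvexOn ℝ Set.univ (fun w : Wt d n => ∑ j, hFun T j w) ∧
    ∀ w : Wt d n,
      Finset.univ.sup' (Finset.univ_nonempty_iff.mpr ⟨⟨0, hN⟩⟩)
          (fun i => |f i - ((∑ j, max 0 ⟪w.1 j, T i⟫) - ∑ j, max 0 ⟪w.2 j, T i⟫)|) =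
        Finset.univ.sup' (Finset.univ_nonempty_iff.mpr ⟨⟨0, hN⟩⟩)
          (fun i => gFun T f i w + ∑ j ∈ Finset.univ.erase i, hFun T j w)
        - ∑ j, hFun T j w := by
  refine ⟨convexOn_sup_aux _ _ _ fun i =>
    (convexOn_gFun T f i).add (convexOn_finsum_aux _ _ fun j => convexOn_hFun T j),
    convexOn_finsum_aux _ _ fun j => convexOn_hFun T j, fun w => ?_⟩
  have key : ∀ i, gFun T f i w + ∑ j ∈ Finset.univ.erase i, hFun T j w =
      |f i - ((∑ j, max 0 ⟪w.1 j, T i⟫) - ∑ j, max 0 ⟪w.2 j, T i⟫)| + ∑ j, hFun T j w := by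
    intro i
    rw [← Finset.add_sum_erase Finset.univ (fun j => hFun T j w) (Finset.mem_univ i)]
    simp only [gFun, hFun, abs_eq_max_neg]
    rw [← add_assoc, add_left_inj, ← max_add_add_right]
    congr 1 <;> ring
  simp only [key]
  rw [eq_sub_iff_add_eq]
  apply le_antisymm
  · rw [← le_sub_iff_add_le]
    refine Finset.sup'_le _ _ fun i hi => ?_
    rw [le_sub_iff_add_le]
    exact Finset.le_sup' (fun i => |f i - ((∑ j, max 0 ⟪w.1 j, T i⟫) -
      ∑ j, max 0 ⟪w.2 j, T i⟫)| + ∑ j, hFun T j w) hi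
  · refine Finset.sup'_le _ _ fun i hi => ?_
    gcongr
    exact Finset.le_sup' (fun i => |f i - ((∑ j, max 0 ⟪w.1 j, T i⟫) -
      ∑ j, max 0 ⟪w.2 j, T i⟫)|) hi
end

section
/- Let g, h : ℝ^m → ℝ be convex and set F = g − h. Let x ∈ ℝ^m, let y be a subgradient of h at x (i.e. h(x') ≥ h(x) + ⟨y, x' − x⟩ for all x'), and let x⁺ ∈ ℝ^m be a minimiser of the convex function u ↦ g(u) − ⟨y, u⟩ over ℝ^m. Then F(x⁺) ≤ F(x); that is, one iteration of the generic DCA does not increase the DC objective. -/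
open scoped RealInnerProductSpace

/-- one iteration of the generic DCA does not increase the DC
objective `F = g - h`: if `y` is a subgradient of `h` at `x` and `x⁺` minimises
`u ↦ g(u) - ⟨y, u⟩` over `ℝ^m`, then `F(x⁺) ≤ F(x)`. -/
theorem stmt_11 (m : ℕ) (g h : EuclideanSpace ℝ (Fin m) → ℝ)
    (hg : ConvexOn ℝ Set.univ g) (hh : ConvexOn ℝ Set.univ h)
    (x y xplus : EuclideanSpace ℝ (Fin m))
    (hy : ∀ x' : EuclideanSpace ℝ (Fin m), h x' ≥ h x + ⟪y, x' - x⟫)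
    (hmin : ∀ u : EuclideanSpace ℝ (Fin m), g xplus - ⟪y, xplus⟫ ≤ g u - ⟪y, u⟫) :
    g xplus - h xplus ≤ g x - h x := by
  have h1 := hy xplus
  have h2 := hmin x
  rw [inner_sub_right] at h1
  linarith
end

section
/- Fix 0 < α < 1 and let σ_α(x) = max{αx, x}. For each i = 1, …, N define h_i^α(w) = Σ_{j=1}^n σ_α(⟨a_j, T_i⟩) + Σ_{j=1}^n σ_α(⟨b_j, T_i⟩) and g_i^α(w) = max{ f_i + 2 Σ_{j=1}^n σ_α(⟨b_j, T_i⟩), 2 Σ_{j=1}^n σ_α(⟨a_j, T_i⟩) − f_i }. Then g_i^α and h_i^α are convex on ℝ^{2nd}, and for every w, g_i^α(w) − h_i^α(w) = | f_i − ( Σ_{j=1}^n σ_α(⟨a_j, T_i⟩) − Σ_{j=1}^n σ_α(⟨b_j, T_i⟩) ) |. -/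
open scoped RealInnerProductSpace

/-- Leaky ReLU, `σ_α(x) = max{αx, x}`: the functions
`h_i^α(w) = ∑_j σ_α(⟨a_j,T_i⟩) + ∑_j σ_α(⟨b_j,T_i⟩)` and
`g_i^α(w) = max{f_i + 2∑_j σ_α(⟨b_j,T_i⟩), 2∑_j σ_α(⟨a_j,T_i⟩) - f_i}` are convex,
and `g_i^α(w) - h_i^α(w) = |f_i - (∑_j σ_α(⟨a_j,T_i⟩) - ∑_j σ_α(⟨b_j,T_i⟩))|`. -/
theorem stmt_12 (d n N : ℕ) (hd : 0 < d) (hn : 0 < n) (hN : 0 < N)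
    (α : ℝ) (hα0 : 0 < α) (hα1 : α < 1)
    (T : Fin N → EuclideanSpace ℝ (Fin d)) (f : Fin N → ℝ) (i : Fin N) :
    ConvexOn ℝ Set.univ (fun w : Wt d n =>
      max (f i + 2 * ∑ j, max (α * ⟪w.2 j, T i⟫) ⟪w.2 j, T i⟫)
          (2 * (∑ j, max (α * ⟪w.1 j, T i⟫) ⟪w.1 j, T i⟫) - f i)) ∧
    ConvexOn ℝ Set.univ (fun w : Wt d n =>
      (∑ j, max (α * ⟪w.1 j, T i⟫) ⟪w.1 j, T i⟫) +
      ∑ j, max (α * ⟪w.2 j, T i⟫) ⟪w.2 j, T i⟫) ∧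
    ∀ w : Wt d n,
      max (f i + 2 * ∑ j, max (α * ⟪w.2 j, T i⟫) ⟪w.2 j, T i⟫)
          (2 * (∑ j, max (α * ⟪w.1 j, T i⟫) ⟪w.1 j, T i⟫) - f i)
        - ((∑ j, max (α * ⟪w.1 j, T i⟫) ⟪w.1 j, T i⟫) +
           ∑ j, max (α * ⟪w.2 j, T i⟫) ⟪w.2 j, T i⟫) =
      |f i - ((∑ j, max (α * ⟪w.1 j, T i⟫) ⟪w.1 j, T i⟫) -
              ∑ j, max (α * ⟪w.2 j, T i⟫) ⟪w.2 j, T i⟫)| := by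
  have key : ∀ t : EuclideanSpace ℝ (Fin d),
      ConvexOn ℝ Set.univ (fun a : Fin n → EuclideanSpace ℝ (Fin d) =>
        ∑ j, max (α * ⟪a j, t⟫) ⟪a j, t⟫) := by
    intro t
    refine ⟨convex_univ, ?_⟩
    intro x _ y _ p q hp hq _
    simp only [smul_eq_mul, Finset.mul_sum, ← Finset.sum_add_distrib]
    refine Finset.sum_le_sum fun j _ => ?_
    simp only [Pi.add_apply, Pi.smul_apply, inner_add_left, real_inner_smul_left]
    have h1 := mul_le_mul_of_nonneg_left (le_max_left (α * ⟪x j, t⟫) ⟪x j, t⟫) hp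
    have h2 := mul_le_mul_of_nonneg_left (le_max_right (α * ⟪x j, t⟫) ⟪x j, t⟫) hp
    have h3 := mul_le_mul_of_nonneg_left (le_max_left (α * ⟪y j, t⟫) ⟪y j, t⟫) hq
    have h4 := mul_le_mul_of_nonneg_left (le_max_right (α * ⟪y j, t⟫) ⟪y j, t⟫) hq
    apply max_le <;> linarith
  have hA : ConvexOn ℝ Set.univ (fun w : Wt d n =>
      ∑ j, max (α * ⟪w.1 j, T i⟫) ⟪w.1 j, T i⟫) :=
    (key (T i)).comp_linearMap (LinearMap.fst ℝ _ _)
  have hB : ConvexOn ℝ Set.univ (fun w : Wt d n =>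
      ∑ j, max (α * ⟪w.2 j, T i⟫) ⟪w.2 j, T i⟫) :=
    (key (T i)).comp_linearMap (LinearMap.snd ℝ _ _)
  refine ⟨?_, hA.add hB, ?_⟩
  · have h1 := (convexOn_const (f i) (convex_univ (𝕜 := ℝ) (E := Wt d n))).add
      (hB.smul (c := (2 : ℝ)) (by norm_num))
    have h2 := (hA.smul (c := (2 : ℝ)) (by norm_num)).add
      (convexOn_const (-f i) (convex_univ (𝕜 := ℝ) (E := Wt d n)))
    exact h1.sup h2
  · intro w
    generalize (∑ j, max (α * ⟪w.1 j, T i⟫) ⟪w.1 j, T i⟫) = A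
    generalize (∑ j, max (α * ⟪w.2 j, T i⟫) ⟪w.2 j, T i⟫) = B
    rw [abs_eq_max_neg, ← max_sub_sub_right]
    congr 1 <;> ring
end

section
/- Define the Manhattan (L1) loss p₁(w) = Σ_{i=1}^N | f_i − ( Σ_{j=1}^n max{0, ⟨a_j, T_i⟩} − Σ_{j=1}^n max{0, ⟨b_j, T_i⟩} ) |. Then p₁(w) = ( Σ_{i=1}^N g_i(w) ) − ( Σ_{i=1}^N h_i(w) ) for every w ∈ ℝ^{2nd}, and both Σ_{i=1}^N g_i and Σ_{i=1}^N h_i are convex on ℝ^{2nd}; in particular the L1 loss of the two-group ReLU network is a DC function. -/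
open scoped RealInnerProductSpace

theorem relu_convex {d n : ℕ} (t : EuclideanSpace ℝ (Fin d)) :
    ConvexOn ℝ Set.univ (fun v : Fin n → EuclideanSpace ℝ (Fin d) => ∑ j, max 0 ⟪v j, t⟫) := by
  refine ⟨convex_univ, ?_⟩
  intro x _ y _ a b ha hb _
  simp only [smul_eq_mul, Finset.mul_sum, ← Finset.sum_add_distrib]
  refine Finset.sum_le_sum fun j _ => ?_
  simp only [Pi.add_apply, Pi.smul_apply, inner_add_left, real_inner_smul_left]
  refine max_le (by positivity) ?_
  exact add_le_add (mul_le_mul_of_nonneg_left (le_max_right _ _) ha)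
    (mul_le_mul_of_nonneg_left (le_max_right _ _) hb)

theorem sum_convex {E : Type*} [AddCommGroup E] [Module ℝ E] {N : ℕ} (F : Fin N → E → ℝ)
    (h : ∀ i, ConvexOn ℝ Set.univ (F i)) :
    ConvexOn ℝ Set.univ (fun w => ∑ i, F i w) := by
  refine ⟨convex_univ, ?_⟩
  intro x _ y _ a b ha hb hab
  simp only [smul_eq_mul, Finset.mul_sum, ← Finset.sum_add_distrib]
  exact Finset.sum_le_sum fun i _ => (h i).2 trivial trivial ha hb hab

/-- the Manhattan (L1) loss
`p₁(w) = ∑_i |f_i - (∑_j max{0,⟨a_j,T_i⟩} - ∑_j max{0,⟨b_j,T_i⟩})|` equals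
`(∑_i g_i) - (∑_i h_i)` with both sums convex; in particular `p₁` is DC. -/
theorem stmt_13 (d n N : ℕ) (hd : 0 < d) (hn : 0 < n) (hN : 0 < N)
    (T : Fin N → EuclideanSpace ℝ (Fin d)) (f : Fin N → ℝ) :
    (∀ w : Wt d n,
      ∑ i, |f i - ((∑ j, max 0 ⟪w.1 j, T i⟫) - ∑ j, max 0 ⟪w.2 j, T i⟫)| =
        (∑ i, gFun T f i w) - ∑ i, hFun T i w) ∧
    ConvexOn ℝ Set.univ (fun w : Wt d n => ∑ i, gFun T f i w) ∧
    ConvexOn ℝ Set.univ (fun w : Wt d n => ∑ i, hFun T i w) := by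
  have hA : ∀ i, ConvexOn ℝ Set.univ (fun w : Wt d n => ∑ j, max 0 ⟪w.1 j, T i⟫) := fun i =>
    (relu_convex (T i)).comp_linearMap (LinearMap.fst ℝ _ _)
  have hB : ∀ i, ConvexOn ℝ Set.univ (fun w : Wt d n => ∑ j, max 0 ⟪w.2 j, T i⟫) := fun i =>
    (relu_convex (T i)).comp_linearMap (LinearMap.snd ℝ _ _)
  refine ⟨fun w => ?_, sum_convex _ fun i => ?_, sum_convex _ fun i => (hA i).add (hB i)⟩
  · rw [← Finset.sum_sub_distrib]
    refine Finset.sum_congr rfl fun i _ => ?_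
    unfold gFun hFun
    generalize (∑ j, max 0 ⟪w.1 j, T i⟫) = A
    generalize (∑ j, max 0 ⟪w.2 j, T i⟫) = B
    rw [abs_eq_max_neg, ← max_sub_sub_right]
    congr 1 <;> ring
  · have h1 := ((hB i).smul (zero_le_two (α := ℝ))).add_const (f i)
    have h2 := ((hA i).smul (zero_le_two (α := ℝ))).add_const (-f i)
    refine (h1.sup h2).congr fun w _ => ?_
    simp [gFun, add_comm, sub_eq_add_neg]
end
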